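/- Lower-order elliptic estimate (Lemma 3.1, single-time form): suppose γ > 4/3 and r₀ < R ≤ (4/(3−α)) r₀, where α = 1/(γ−1). Then there exist constants ε₀ ∈ (0,1) and C > 0, depending only on γ, A, g₀, r₀, R, with the following property. Let w : [r₀,R] → ℝ be twice continuously differentiable and u, z : [r₀,R] → ℝ continuous, with w(r₀) = 0, 1 + w > 0 and 1 + w + yw′ > 0 on [r₀,R], sup_{[r₀,R]} (|w| + |y w′|) ≤ ε₀, and satisfying for all y ∈ (r₀,R) the relation y ρ̄ z + y ρ̄ u + (1+w)² [ ρ̄^γ (1+w)^{−2γ}(1+w+yw′)^{−γ} ]′ − (ρ̄^γ)′/(1+w)² = 0. Then ∫_{r₀}^R [ y² σ(y)^α w′(y)² + y⁴ σ(y)^{α+2} w″(y)² ] dy ≤ C ∫_{r₀}^R [ y⁴ σ(y)^α (w² + u² + z²) + y² σ(y)^{α+1} (w² + (yw′)²) ] dy. -/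

import Mathlib

open Real Set

lemma aux_abs5 (a b c d e : ℝ) : |a + b - c - d - e| ≤ |a| + |b| + |c| + |d| + |e| := by
  rw [abs_le]
  have := abs_le.1 (le_refl |a|)
  have := abs_le.1 (le_refl |b|)
  have := abs_le.1 (le_refl |c|)
  have := abs_le.1 (le_refl |d|)
  have := abs_le.1 (le_refl |e|)
  constructor <;> linarith

set_option maxHeartbeats 1000000 in
lemma aux_alg (γ r₀ κ M : ℝ) (hγ : 0 < γ) (hr₀ : 0 < r₀) (hκ : 0 < κ) (hM : 0 < M) :
    ∃ η > 0, ∃ Ca > 0, ∃ Cb > 0, ∀ y m s w v X z u G H1 H2 : ℝ, r₀ ≤ y → κ ≤ m → m ≤ M → 0 ≤ s →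
      |G + (3 * γ - 4) * w + γ * (y * v)| ≤ η * (|w| + |y * v|) → |H1 - 1| ≤ η → |H2 - 4| ≤ η →
      y * (z + u) - m * G - γ * (s * H2 * v + H1 * y * X) = 0 →
      v ^ 2 + X ^ 2 ≤ Ca * (2 * v * X - m * v ^ 2) + Cb * (z ^ 2 + u ^ 2 + w ^ 2 + s ^ 2 * v ^ 2) := by
  -- C1 bound
  obtain ⟨C, hC, hC1, hC2, hC3, hC4⟩ : ∃ C : ℝ, 0 < C ∧ 1 / γ ≤ C ∧
      M * |3 * γ - 4| / (γ * r₀) + M / (γ * r₀) ≤ C ∧ 5 / r₀ ≤ C ∧ M / γ + M ≤ C :=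
    ⟨1 / γ + (M * |3 * γ - 4| / (γ * r₀) + M / (γ * r₀)) + 5 / r₀ + (M / γ + M), by positivity,
      by have : 0 < 5 / r₀ := by positivity
         have : 0 < M / γ + M := by positivity
         have : 0 < M * |3 * γ - 4| / (γ * r₀) + M / (γ * r₀) := by positivity
         linarith,
      by have : 0 < 5 / r₀ := by positivity
         have : 0 < M / γ + M := by positivity
         have : 0 < 1 / γ := by positivity
         linarith,
      by have : 0 < M * |3 * γ - 4| / (γ * r₀) + M / (γ * r₀) := by positivity
         have : 0 < M / γ + M := by positivity
         have : 0 < 1 / γ := by positivity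
         linarith,
      by have : 0 < M * |3 * γ - 4| / (γ * r₀) + M / (γ * r₀) := by positivity
         have : 0 < 5 / r₀ := by positivity
         have : 0 < 1 / γ := by positivity
         linarith⟩
  obtain ⟨η, hη, hη2, hη3⟩ : ∃ η : ℝ, 0 < η ∧ η ≤ 1 / 2 ∧ 40 * C ^ 2 * η ^ 2 ≤ κ ^ 2 / 4 := by
    refine ⟨min (1 / 2) (κ / (13 * C)), by positivity, min_le_left _ _, ?_⟩
    have h1 : min (1 / 2) (κ / (13 * C)) ≤ κ / (13 * C) := min_le_right _ _
    have h2 : 0 < min (1 / 2) (κ / (13 * C)) := by positivity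
    have h3 : (min (1 / 2) (κ / (13 * C))) ^ 2 ≤ (κ / (13 * C)) ^ 2 := by gcongr
    calc _ ≤ 40 * C ^ 2 * (κ / (13 * C)) ^ 2 := by gcongr
      _ = 40 / 169 * κ ^ 2 := by field_simp; norm_num
      _ ≤ _ := by nlinarith [sq_nonneg κ]
  refine ⟨η, hη, (1 + κ ^ 2 + 2 * M ^ 2) * (4 / κ), by positivity,
    (1 + κ ^ 2 + 2 * M ^ 2) * (160 * C ^ 2 / κ ^ 2) + 40 * C ^ 2, by positivity, ?_⟩
  intro y m s w v X z u G H1 H2 hy hm hmM hs hG h1 h2 heq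
  have hy0 : 0 < y := by linarith
  have hm0 : 0 < m := by linarith
  -- f bound
  have hf : |X - m * v| ≤ 2 * C * (|z| + |u| + |w| + s * |v| + η * |v|) := by
    set f := X - m * v with hfdef
    set g1 := G + (3 * γ - 4) * w + γ * (y * v) with hg1
    have e : f = 1 / γ * (z + u) + m * (3 * γ - 4) / (γ * y) * w - m / (γ * y) * g1
        - s / y * H2 * v - (H1 - 1) * X := by
      field_simp
      rw [hg1, hfdef]
      linear_combination -heq
    have hXf : |X| ≤ |f| + M * |v| := by
      have : X = f + m * v := by rw [hfdef]; ring
      calc |X| = |f + m * v| := by rw [← this]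
        _ ≤ |f| + |m * v| := abs_add_le _ _
        _ = |f| + m * |v| := by rw [abs_mul, abs_of_pos hm0]
        _ ≤ _ := by gcongr
    have t1 : |1 / γ * (z + u)| ≤ C * (|z| + |u|) := by
      rw [abs_mul, abs_of_pos (by positivity : 0 < 1 / γ)]
      gcongr; exact abs_add_le _ _
    have t2 : |m * (3 * γ - 4) / (γ * y) * w| ≤ M * |3 * γ - 4| / (γ * r₀) * |w| := by
      rw [abs_mul, abs_div, abs_mul, abs_of_pos hm0, abs_of_pos (by positivity : 0 < γ * y)]
      gcongr
    have t3 : |m / (γ * y) * g1| ≤ M / (γ * r₀) * |w| + M / γ * (η * |v|) := by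
      rw [abs_mul, abs_of_pos (by positivity : 0 < m / (γ * y))]
      calc m / (γ * y) * |g1| ≤ m / (γ * y) * (η * (|w| + |y * v|)) := by gcongr
        _ = m / (γ * y) * (η * |w|) + m / γ * (η * |v|) := by
            rw [abs_mul, abs_of_pos hy0]; field_simp
        _ ≤ M / (γ * r₀) * (1 * |w|) + M / γ * (η * |v|) := by gcongr; linarith
        _ = _ := by ring
    have t4 : |s / y * H2 * v| ≤ 5 / r₀ * (s * |v|) := by
      have : |H2| ≤ 5 := by
        rw [abs_le] at h2 ⊢; constructor <;> linarith
      rw [abs_mul, abs_mul, abs_of_nonneg (by positivity : 0 ≤ s / y)]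
      calc s / y * |H2| * |v| ≤ s / r₀ * 5 * |v| := by gcongr
        _ = _ := by ring
    have t5 : |(H1 - 1) * X| ≤ 1 / 2 * |f| + M * (η * |v|) := by
      rw [abs_mul]
      calc |H1 - 1| * |X| ≤ η * (|f| + M * |v|) := by gcongr
        _ = η * |f| + M * (η * |v|) := by ring
        _ ≤ _ := by gcongr
    have t : |f| ≤ |1 / γ * (z + u)| + |m * (3 * γ - 4) / (γ * y) * w| + |m / (γ * y) * g1|
        + |s / y * H2 * v| + |(H1 - 1) * X| := by
      conv_lhs => rw [e]
      exact aux_abs5 _ _ _ _ _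
    have w1 : (M * |3 * γ - 4| / (γ * r₀) + M / (γ * r₀)) * |w| ≤ C * |w| := by gcongr
    have w2 : 5 / r₀ * (s * |v|) ≤ C * (s * |v|) := by gcongr
    have w3 : (M / γ + M) * (η * |v|) ≤ C * (η * |v|) := by gcongr
    linarith
  have hf2 : (X - m * v) ^ 2 ≤ 20 * C ^ 2 * (z ^ 2 + u ^ 2 + w ^ 2 + s ^ 2 * v ^ 2 + η ^ 2 * v ^ 2) := by
    have q : ∀ a b c d e : ℝ, (a + b + c + d + e) ^ 2 ≤ 5 * (a ^ 2 + b ^ 2 + c ^ 2 + d ^ 2 + e ^ 2) := by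
      intro a b c d e
      nlinarith [sq_nonneg (a - b), sq_nonneg (a - c), sq_nonneg (a - d), sq_nonneg (a - e),
        sq_nonneg (b - c), sq_nonneg (b - d), sq_nonneg (b - e), sq_nonneg (c - d),
        sq_nonneg (c - e), sq_nonneg (d - e)]
    calc (X - m * v) ^ 2 = |X - m * v| ^ 2 := (sq_abs _).symm
      _ ≤ (2 * C * (|z| + |u| + |w| + s * |v| + η * |v|)) ^ 2 := by gcongr
      _ = 4 * C ^ 2 * (|z| + |u| + |w| + s * |v| + η * |v|) ^ 2 := by ring
      _ ≤ 4 * C ^ 2 * (5 * (|z| ^ 2 + |u| ^ 2 + |w| ^ 2 + (s * |v|) ^ 2 + (η * |v|) ^ 2)) := by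
          gcongr; exact q _ _ _ _ _
      _ = _ := by rw [mul_pow s, mul_pow η]; simp only [sq_abs]; ring
  set f := X - m * v with hfdef
  set D := z ^ 2 + u ^ 2 + w ^ 2 + s ^ 2 * v ^ 2 with hD
  have hD0 : 0 ≤ D := by positivity
  have hX : X = f + m * v := by rw [hfdef]; ring
  have hP : 2 * v * X - m * v ^ 2 = 2 * v * f + m * v ^ 2 := by rw [hX]; ring
  rw [hP]
  set P := 2 * v * f + m * v ^ 2 with hPd
  -- kappa * P ≥ kappa^2/2 v^2 - 2 f^2
  have hkP : κ ^ 2 / 2 * v ^ 2 - 2 * f ^ 2 ≤ κ * P := by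
    have : κ * κ * v ^ 2 ≤ κ * m * v ^ 2 := by gcongr
    rw [hPd]; nlinarith [sq_nonneg (κ * v + 2 * f)]
  have hηv : 40 * C ^ 2 * η ^ 2 * v ^ 2 ≤ κ ^ 2 / 4 * v ^ 2 := by gcongr
  have hv : v ^ 2 ≤ 4 / κ * P + 160 * C ^ 2 / κ ^ 2 * D := by
    have : κ ^ 2 / 4 * v ^ 2 ≤ κ * P + 40 * C ^ 2 * D := by nlinarith
    have h3 : v ^ 2 = 4 / κ ^ 2 * (κ ^ 2 / 4 * v ^ 2) := by field_simp
    rw [h3]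
    calc _ ≤ 4 / κ ^ 2 * (κ * P + 40 * C ^ 2 * D) := by gcongr
      _ = _ := by field_simp; ring
  have hX2 : X ^ 2 ≤ 2 * f ^ 2 + 2 * M ^ 2 * v ^ 2 := by
    have : m ^ 2 * v ^ 2 ≤ M ^ 2 * v ^ 2 := by gcongr
    rw [hX]; nlinarith [sq_nonneg (f - m * v)]
  have hfin : v ^ 2 + X ^ 2 ≤ (1 + κ ^ 2 + 2 * M ^ 2) * v ^ 2 + 40 * C ^ 2 * D := by
    have : 0 ≤ κ ^ 2 * v ^ 2 := by positivity
    nlinarith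
  calc _ ≤ (1 + κ ^ 2 + 2 * M ^ 2) * v ^ 2 + 40 * C ^ 2 * D := hfin
    _ ≤ (1 + κ ^ 2 + 2 * M ^ 2) * (4 / κ * P + 160 * C ^ 2 / κ ^ 2 * D) + 40 * C ^ 2 * D := by gcongr
    _ = _ := by ring


lemma aux_nl (γ η : ℝ) (hη : 0 < η) :
    ∃ ε ∈ Ioo (0 : ℝ) 1, ∀ p q : ℝ, |p| + |q| ≤ ε →
      |((1 + p) ^ 2 * ((1 + p) ^ (-(2 * γ)) * (1 + p + q) ^ (-γ)) - 1 / (1 + p) ^ 2)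
        + (3 * γ - 4) * p + γ * q| ≤ η * (|p| + |q|) ∧
      |(1 + p) ^ 2 * ((1 + p) ^ (-(2 * γ)) * (1 + p + q) ^ (-γ)) / (1 + p + q) - 1| ≤ η ∧
      |(1 + p) ^ 2 * ((1 + p) ^ (-(2 * γ)) * (1 + p + q) ^ (-γ)) *
        (2 / (1 + p) + 2 / (1 + p + q)) - 4| ≤ η := by
  have d1 : HasFDerivAt (fun x : ℝ × ℝ => 1 + x.1) (ContinuousLinearMap.fst ℝ ℝ ℝ) (0, 0) :=
    (hasFDerivAt_fst).const_add 1
  have d2 : HasFDerivAt (fun x : ℝ × ℝ => 1 + x.1 + x.2)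
      (ContinuousLinearMap.fst ℝ ℝ ℝ + ContinuousLinearMap.snd ℝ ℝ ℝ) (0, 0) :=
    d1.add hasFDerivAt_snd
  have d3 := d1.rpow_const (p := -(2 * γ)) (Or.inl (by norm_num))
  have d4 := d2.rpow_const (p := -γ) (Or.inl (by norm_num))
  have d5 := (d1.pow 2).mul (d3.mul d4)
  have d6 := (hasDerivAt_inv (x := (1 : ℝ)) (by norm_num)).comp_hasFDerivAt_of_eq (0, 0) (d1.pow 2) (by norm_num)
  have d7 := d5.sub d6
  have d8 : HasFDerivAt (fun x : ℝ × ℝ => (1 + x.1) ^ 2 * ((1 + x.1) ^ (-(2 * γ)) * (1 + x.1 + x.2) ^ (-γ))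
      - 1 / (1 + x.1) ^ 2)
      (-(3 * γ - 4) • ContinuousLinearMap.fst ℝ ℝ ℝ - γ • ContinuousLinearMap.snd ℝ ℝ ℝ) (0, 0) := by
    have d9 := d7.congr_fderiv (f' := _) (g' := -(3 * γ - 4) • ContinuousLinearMap.fst ℝ ℝ ℝ - γ • ContinuousLinearMap.snd ℝ ℝ ℝ) (by
      apply ContinuousLinearMap.ext
      rintro ⟨p, q⟩
      simp
      ring)
    refine d9.congr_of_eventuallyEq (Filter.Eventually.of_forall fun x => ?_)
    simp
  have e1 := d8.isLittleO.def hη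
  have c5 := d5.continuousAt
  have c1 := d1.continuousAt
  have c2 := d2.continuousAt
  have c6 := c5.div c2 (by norm_num)
  have c7 := c5.mul ((continuousAt_const (y := (2 : ℝ)).div c1 (by norm_num)).add
    (continuousAt_const (y := (2 : ℝ)).div c2 (by norm_num)))
  have e2 := Metric.continuousAt_iff'.1 c6 η hη
  have e3 := Metric.continuousAt_iff'.1 c7 η hη
  obtain ⟨δ, hδ, hball⟩ := Metric.eventually_nhds_iff.1 (e1.and (e2.and e3))
  refine ⟨min (1 / 2) (δ / 2), ⟨by positivity, ?_⟩, ?_⟩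
  · exact (min_le_left _ _).trans_lt (by norm_num)
  intro p q hpq
  have hle : |p| + |q| ≤ δ / 2 := hpq.trans (min_le_right _ _)
  have hnorm : ‖((p, q) : ℝ × ℝ)‖ ≤ |p| + |q| := by
    rw [Prod.norm_def]
    simp only [Real.norm_eq_abs]
    exact max_le (by linarith [abs_nonneg q]) (by linarith [abs_nonneg p])
  have hd : dist ((p, q) : ℝ × ℝ) (0, 0) < δ := by
    rw [show ((0, 0) : ℝ × ℝ) = 0 from rfl, dist_zero_right]; linarith
  obtain ⟨a1, a2, a3⟩ := hball hd
  refine ⟨?_, ?_, ?_⟩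
  · rw [show ((0, 0) : ℝ × ℝ) = 0 from rfl, sub_zero] at a1
    refine le_trans ?_ (a1.trans (by gcongr))
    rw [Real.norm_eq_abs]
    apply le_of_eq
    congr 1
    simp
    ring
  · rw [Real.dist_eq] at a2
    refine le_trans (le_of_eq ?_) a2.le
    simp
  · rw [Real.dist_eq] at a3
    refine le_trans (le_of_eq ?_) a3.le
    simp
    norm_num

lemma aux_sig (K R y α : ℝ) (hK : 0 < K) (hy : 0 < y) (hyR : y < R) :
    HasDerivAt (fun a => (K * (1 / a - 1 / R)) ^ (α + 1))
      (-((α + 1) * (K / y ^ 2)) * (K * (1 / y - 1 / R)) ^ α) y := by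
  have hs : 0 < 1 / y - 1 / R := by
    rw [sub_pos]; exact one_div_lt_one_div_of_lt hy hyR
  have h1 : HasDerivAt (fun a : ℝ => K * (1 / a - 1 / R)) (K * (-(y ^ 2)⁻¹)) y := by
    have := ((hasDerivAt_inv hy.ne').sub_const (1 / R)).const_mul K
    simpa [one_div] using this
  have h2 := h1.rpow_const (p := α + 1) (Or.inl (by positivity))
  refine h2.congr_deriv ?_
  rw [add_sub_cancel_right]
  ring

lemma aux_pt (γ K R y α : ℝ) (hK : 0 < K) (hy : 0 < y) (hyR : y < R) (w dw : ℝ → ℝ) (v2 : ℝ)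
    (hw : HasDerivAt w (dw y) y) (hdw : HasDerivAt dw v2 y) (ha : 0 < 1 + w y)
    (hb : 0 < 1 + w y + y * dw y) :
    HasDerivAt (fun a => (K * (1 / a - 1 / R)) ^ (α + 1) * (1 + w a) ^ (-(2 * γ)) *
        (1 + w a + a * dw a) ^ (-γ))
      ((K * (1 / y - 1 / R)) ^ α * ((1 + w y) ^ (-(2 * γ)) * (1 + w y + y * dw y) ^ (-γ)) *
        (-((α + 1) * (K / y ^ 2)) - γ * (K * (1 / y - 1 / R)) *
          (2 * dw y / (1 + w y) + (2 * dw y + y * v2) / (1 + w y + y * dw y)))) y := by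
  have hs : 0 < K * (1 / y - 1 / R) := by
    apply mul_pos hK; rw [sub_pos]; exact one_div_lt_one_div_of_lt hy hyR
  have h1 := aux_sig K R y α hK hy hyR
  have h2 := (hw.const_add 1).rpow_const (p := -(2 * γ)) (Or.inl ha.ne')
  have h3 := ((hw.const_add 1).add ((hasDerivAt_id y).mul hdw)).rpow_const (p := -γ) (Or.inl hb.ne')
  have h4 := (h1.mul h2).mul h3
  refine h4.congr_deriv ?_
  simp only [Pi.mul_apply, Pi.add_apply, id]
  rw [rpow_sub_one ha.ne', rpow_sub_one hb.ne', rpow_add_one hs.ne']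
  generalize (K * (1 / y - 1 / R)) ^ α = S
  generalize (1 + w y) ^ (-(2 * γ)) = F1
  generalize (1 + w y + y * dw y) ^ (-γ) = F2
  generalize K * (1 / y - 1 / R) = s
  field_simp
  ring

set_option maxHeartbeats 4000000 in
theorem stmt_17 (γ A g₀ r₀ R : ℝ) (hγ : 4 / 3 < γ) (hA : 0 < A) (hg₀ : 0 < g₀)
    (hr₀ : 0 < r₀) (hrR : r₀ < R) (hRr : R ≤ 4 / (3 - 1 / (γ - 1)) * r₀) :
    let α : ℝ := 1 / (γ - 1);
    let Abar : ℝ := ((γ - 1) * g₀ / (γ * A)) ^ (1 / (γ - 1));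
    let ρbar : ℝ → ℝ := fun y => Abar * (1 / y - 1 / R) ^ (1 / (γ - 1));
    let σ : ℝ → ℝ := fun y => Abar ^ (γ - 1) * (1 / y - 1 / R);
    ∃ ε₀ ∈ Ioo (0 : ℝ) 1, ∃ C : ℝ, 0 < C ∧
      ∀ w u z : ℝ → ℝ,
        ContDiffOn ℝ 2 w (Icc r₀ R) →
        ContinuousOn u (Icc r₀ R) →
        ContinuousOn z (Icc r₀ R) →
        w r₀ = 0 →
        (∀ y ∈ Icc r₀ R, 0 < 1 + w y ∧ 0 < 1 + w y + y * deriv w y) →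
        (∀ y ∈ Icc r₀ R, |w y| + |y * deriv w y| ≤ ε₀) →
        (∀ y ∈ Ioo r₀ R,
          y * ρbar y * z y + y * ρbar y * u y
            + (1 + w y) ^ 2 *
                deriv (fun a => ρbar a ^ γ * (1 + w a) ^ (-(2 * γ)) *
                  (1 + w a + a * deriv w a) ^ (-γ)) y
            - deriv (fun a => ρbar a ^ γ) y / (1 + w y) ^ 2 = 0) →
        (∫ y in r₀..R,
            (y ^ 2 * σ y ^ α * (deriv w y) ^ 2
              + y ^ 4 * σ y ^ (α + 2) * (deriv (deriv w) y) ^ 2)) ≤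
          C * ∫ y in r₀..R,
            (y ^ 4 * σ y ^ α * (w y ^ 2 + u y ^ 2 + z y ^ 2)
              + y ^ 2 * σ y ^ (α + 1) * (w y ^ 2 + (y * deriv w y) ^ 2)) := by
  intro α Abar ρbar σ
  have hγ1 : 0 < γ - 1 := by linarith
  have hγ0 : 0 < γ := by linarith
  have hR : 0 < R := by linarith
  have hα : 0 < α := by positivity
  have hαγ : α * γ = α + 1 := by simp only [α]; field_simp; ring
  obtain ⟨K, hKdef⟩ : ∃ K, K = (γ - 1) * g₀ / (γ * A) := ⟨_, rfl⟩
  have hK : 0 < K := by rw [hKdef]; positivity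
  have hAbar : Abar = K ^ α := by simp only [Abar, α, hKdef]
  have hAbarK : Abar ^ (γ - 1) = K := by
    rw [hAbar, ← rpow_mul hK.le]
    have : α * (γ - 1) = 1 := by simp only [α]; field_simp
    rw [this, rpow_one]
  have hσ : σ = fun y => K * (1 / y - 1 / R) := by simp only [σ, hAbarK]
  have hρ : ∀ y, 0 < y → y < R → ρbar y = (K * (1 / y - 1 / R)) ^ α := by
    intro y hy hyR
    have hs : 0 < 1 / y - 1 / R := by
      rw [sub_pos]; exact one_div_lt_one_div_of_lt hy hyR
    rw [mul_rpow hK.le hs.le, ← hAbar]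
  have hργ : ∀ y, 0 < y → y < R → ρbar y ^ γ = (K * (1 / y - 1 / R)) ^ (α + 1) := by
    intro y hy hyR
    have hs : 0 < 1 / y - 1 / R := by
      rw [sub_pos]; exact one_div_lt_one_div_of_lt hy hyR
    rw [hρ y hy hyR, ← rpow_mul (by positivity), hαγ]
  rw [hσ]
  clear_value α Abar ρbar
  clear hσ
  clear σ
  have hκ : 0 < (α + 1) * (K / R ^ 2) := by positivity
  have hM : 0 < (α + 1) * (K / r₀ ^ 2) := by positivity
  obtain ⟨η, hη, Ca, hCa, Cb, hCb, halg⟩ := aux_alg γ r₀ _ _ hγ0 hr₀ hκ hM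
  obtain ⟨ε, hε, hnl⟩ := aux_nl γ η hη
  obtain ⟨S, hS⟩ : ∃ S, S = K * (1 / r₀ - 1 / R) := ⟨_, rfl⟩
  have hS0 : 0 < S := by
    rw [hS]; apply mul_pos hK; rw [sub_pos]; exact one_div_lt_one_div_of_lt hr₀ hrR
  refine ⟨ε, hε, (R ^ 2 + R ^ 4) * Cb * ((1 + S) / r₀ ^ 4), by positivity, ?_⟩
  intro w u z hw hu hz _ hpos hsmall heq
  obtain ⟨s, hs⟩ : ∃ s : ℝ → ℝ, s = fun y => K * (1 / y - 1 / R) := ⟨_, rfl⟩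
  have hud : UniqueDiffOn ℝ (Icc r₀ R) := uniqueDiffOn_Icc hrR
  obtain ⟨v, hv⟩ : ∃ v, v = derivWithin w (Icc r₀ R) := ⟨_, rfl⟩
  obtain ⟨v', hv'⟩ : ∃ v', v' = derivWithin v (Icc r₀ R) := ⟨_, rfl⟩
  have hvC : ContDiffOn ℝ 1 v (Icc r₀ R) := by
    rw [hv]; exact hw.derivWithin hud (by norm_num)
  have hvc : ContinuousOn v (Icc r₀ R) := hvC.continuousOn
  have hv'c : ContinuousOn v' (Icc r₀ R) := by
    rw [hv']; exact hvC.continuousOn_derivWithin hud le_rfl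
  have hwc : ContinuousOn w (Icc r₀ R) := hw.continuousOn
  have hnh : ∀ y ∈ Ioo r₀ R, Icc r₀ R ∈ nhds y := fun y hy => Icc_mem_nhds hy.1 hy.2
  have hdw : ∀ y ∈ Ioo r₀ R, HasDerivAt w (v y) y := by
    intro y hy
    rw [hv]
    exact ((hw.differentiableOn (by norm_num)) y (Ioo_subset_Icc_self hy)).hasDerivWithinAt.hasDerivAt (hnh y hy)
  have hdv : ∀ y ∈ Ioo r₀ R, HasDerivAt v (v' y) y := by
    intro y hy
    rw [hv']
    exact ((hvC.differentiableOn (by norm_num)) y (Ioo_subset_Icc_self hy)).hasDerivWithinAt.hasDerivAt (hnh y hy)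
  have hwv : ∀ y ∈ Ioo r₀ R, deriv w y = v y := fun y hy => (hdw y hy).deriv
  have hev : ∀ y ∈ Ioo r₀ R, deriv w =ᶠ[nhds y] v := by
    intro y hy
    filter_upwards [Ioo_mem_nhds hy.1 hy.2] with a ha using hwv a ha
  have hwv' : ∀ y ∈ Ioo r₀ R, deriv (deriv w) y = v' y := by
    intro y hy
    rw [(hev y hy).deriv_eq]; exact (hdv y hy).deriv
  have hs0 : ∀ y ∈ Icc r₀ R, 0 ≤ s y := by
    intro y hy
    rw [hs]
    have : 1 / R ≤ 1 / y := one_div_le_one_div_of_le (by linarith [hy.1]) hy.2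
    exact mul_nonneg hK.le (by linarith)
  have hsS : ∀ y ∈ Icc r₀ R, s y ≤ S := by
    intro y hy
    rw [hs, hS]
    have : 1 / y ≤ 1 / r₀ := one_div_le_one_div_of_le hr₀ hy.1
    show K * (1 / y - 1 / R) ≤ K * (1 / r₀ - 1 / R)
    gcongr
  have hspos : ∀ y ∈ Ioo r₀ R, 0 < s y := by
    intro y hy
    rw [hs]
    apply mul_pos hK; rw [sub_pos]; exact one_div_lt_one_div_of_lt (hr₀.trans hy.1) hy.2
  have hsc : ContinuousOn s (Icc r₀ R) := by
    rw [hs]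
    apply continuousOn_const.mul
    apply ContinuousOn.sub _ continuousOn_const
    exact continuousOn_const.div continuousOn_id (fun y hy => (hr₀.trans_le hy.1).ne')
  have hrpc : ∀ p : ℝ, 0 ≤ p → ContinuousOn (fun y => s y ^ p) (Icc r₀ R) :=
    fun p hp => hsc.rpow_const (fun _ _ => Or.inr hp)
  obtain ⟨E, hE⟩ : ∃ E : ℝ → ℝ, E = fun y => -((α + 1) * (K / y ^ 2)) * s y ^ α * v y ^ 2
      + s y ^ (α + 1) * (2 * v y * v' y) := ⟨_, rfl⟩
  have hEc : ContinuousOn E (Icc r₀ R) := by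
    have h1 : ContinuousOn (fun y : ℝ => K / y ^ 2) (Icc r₀ R) :=
      continuousOn_const.div (by fun_prop) (fun y hy => by
        have := hr₀.trans_le hy.1
        positivity)
    have h2 := hrpc α hα.le
    have h3 := hrpc (α + 1) (by linarith)
    rw [hE]
    fun_prop
  have hEint : ∫ y in r₀..R, E y ≤ 0 := by
    have hc : ContinuousOn (fun y => s y ^ (α + 1) * v y ^ 2) (Icc r₀ R) :=
      (hrpc (α + 1) (by linarith)).mul (hvc.pow 2)
    rw [intervalIntegral.integral_eq_sub_of_hasDerivAt_of_le hrR.le hc (f' := E) ?_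
      (hEc.intervalIntegrable_of_Icc hrR.le)]
    · have : s R = 0 := by rw [hs]; simp
      simp only [this]
      rw [zero_rpow (by linarith)]
      have : 0 ≤ s r₀ ^ (α + 1) := rpow_nonneg (hs0 r₀ ⟨le_rfl, hrR.le⟩) _
      nlinarith [mul_nonneg this (sq_nonneg (v r₀))]
    · intro y hy
      have h1 := aux_sig K R y α hK (hr₀.trans hy.1) hy.2
      have h2 := h1.mul ((hdv y hy).pow 2)
      rw [hE, hs]
      refine h2.congr_deriv ?_
      simp
  -- pointwise estimate
  have hpt : ∀ y ∈ Ioo r₀ R,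
      y ^ 2 * s y ^ α * v y ^ 2 + y ^ 4 * s y ^ (α + 2) * v' y ^ 2 ≤
      (R ^ 2 + R ^ 4) * Ca * E y + (R ^ 2 + R ^ 4) * Cb * ((1 + S) / r₀ ^ 4) *
        (y ^ 4 * s y ^ α * (w y ^ 2 + u y ^ 2 + z y ^ 2)
              + y ^ 2 * s y ^ (α + 1) * (w y ^ 2 + (y * v y) ^ 2)) := by
    intro y hy
    have hyI := Ioo_subset_Icc_self hy
    have hy0 : 0 < y := hr₀.trans hy.1
    have hsp := hspos y hy
    obtain ⟨ha, hb⟩ := hpos y hyI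
    have hsm := hsmall y hyI
    have hq := heq y hy
    rw [hwv y hy] at hb hsm
    obtain ⟨n1, n2, n3⟩ := hnl _ _ hsm
    have hd1 := aux_pt γ K R y α hK hy0 hy.2 w v (v' y) (hdw y hy) (hdv y hy) ha hb
    have hd2 := aux_sig K R y α hK hy0 hy.2
    have e1 : (fun a => ρbar a ^ γ * (1 + w a) ^ (-(2 * γ)) * (1 + w a + a * deriv w a) ^ (-γ))
        =ᶠ[nhds y] (fun a => (K * (1 / a - 1 / R)) ^ (α + 1) * (1 + w a) ^ (-(2 * γ)) *
        (1 + w a + a * v a) ^ (-γ)) := by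
      filter_upwards [Ioo_mem_nhds hy.1 hy.2] with a ha
      rw [hργ a (hr₀.trans ha.1) ha.2, hwv a ha]
    have e2 : (fun a => ρbar a ^ γ) =ᶠ[nhds y] (fun a => (K * (1 / a - 1 / R)) ^ (α + 1)) := by
      filter_upwards [Ioo_mem_nhds hy.1 hy.2] with a ha
      rw [hργ a (hr₀.trans ha.1) ha.2]
    rw [e1.deriv_eq, e2.deriv_eq, hd1.deriv, hd2.deriv, hρ y hy0 hy.2] at hq
    have hsy : K * (1 / y - 1 / R) = s y := by rw [hs]
    rw [hsy] at hq
    have hT : 0 < s y ^ α := rpow_pos_of_pos hsp _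
    have hm1 : (α + 1) * (K / R ^ 2) ≤ (α + 1) * (K / y ^ 2) := by
      have := hy.2.le
      gcongr
    have hm2 : (α + 1) * (K / y ^ 2) ≤ (α + 1) * (K / r₀ ^ 2) := by
      have := hy.1.le
      gcongr
    have key := halg y ((α + 1) * (K / y ^ 2)) (s y) (w y) (v y) (s y * v' y) (z y) (u y) _ _ _
      hy.1.le hm1 hm2 hsp.le n1 n2 n3 (by
        apply mul_left_cancel₀ hT.ne'
        rw [mul_zero, ← hq]
        generalize (1 + w y) ^ (-(2 * γ)) = F1
        generalize (1 + w y + y * v y) ^ (-γ) = F2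
        generalize s y ^ α = T
        generalize (α + 1) * (K / y ^ 2) = m
        field_simp
        ring)
    rw [rpow_add hsp α 2, rpow_add_one hsp.ne', rpow_two, hE]
    simp only []
    rw [rpow_add_one hsp.ne']
    have hsSy := hsS y hyI
    have hry := hy.1.le
    have hyR := hy.2.le
    generalize s y ^ α = T at *
    generalize (α + 1) * (K / y ^ 2) = m at *
    generalize s y = σ at *
    generalize v y = V at *
    generalize v' y = V' at *
    generalize w y = W at *
    generalize u y = U at *
    generalize z y = Z at *
    have l1 : y ^ 2 * T * V ^ 2 + y ^ 4 * (T * σ ^ 2) * V' ^ 2 ≤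
        (R ^ 2 + R ^ 4) * (T * (V ^ 2 + (σ * V') ^ 2)) := by
      have a1 : y ^ 2 * (T * V ^ 2) ≤ (R ^ 2 + R ^ 4) * (T * V ^ 2) := by
        gcongr
        have : y ^ 2 ≤ R ^ 2 := by gcongr
        have : 0 ≤ R ^ 4 := by positivity
        linarith
      have a2 : y ^ 4 * (T * (σ * V') ^ 2) ≤ (R ^ 2 + R ^ 4) * (T * (σ * V') ^ 2) := by
        gcongr
        have : y ^ 4 ≤ R ^ 4 := by gcongr
        have : 0 ≤ R ^ 2 := by positivity
        linarith
      linarith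
    have l2 : T * (Z ^ 2 + U ^ 2 + W ^ 2 + σ ^ 2 * V ^ 2) ≤ (1 + S) / r₀ ^ 4 *
        (y ^ 4 * T * (W ^ 2 + U ^ 2 + Z ^ 2) + y ^ 2 * (T * σ) * (W ^ 2 + (y * V) ^ 2)) := by
      rw [div_mul_eq_mul_div, le_div_iff₀ (by positivity)]
      have h4 : r₀ ^ 4 ≤ y ^ 4 := by gcongr
      have b1 : T * (Z ^ 2 + U ^ 2 + W ^ 2) * r₀ ^ 4 ≤ (1 + S) * (T * (Z ^ 2 + U ^ 2 + W ^ 2) * y ^ 4) := by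
        have : T * (Z ^ 2 + U ^ 2 + W ^ 2) * r₀ ^ 4 ≤ T * (Z ^ 2 + U ^ 2 + W ^ 2) * y ^ 4 := by gcongr
        have : 0 ≤ S * (T * (Z ^ 2 + U ^ 2 + W ^ 2) * y ^ 4) := by positivity
        linarith
      have b2 : T * (σ * σ * V ^ 2) * r₀ ^ 4 ≤ (1 + S) * (T * σ * V ^ 2 * y ^ 4) := by
        have : T * (σ * σ * V ^ 2) * r₀ ^ 4 ≤ T * (σ * S * V ^ 2) * y ^ 4 := by gcongr
        have : 0 ≤ T * σ * V ^ 2 * y ^ 4 := by positivity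
        linarith
      have b3 : 0 ≤ (1 + S) * (y ^ 2 * (T * σ) * W ^ 2) := by positivity
      linarith
    calc _ ≤ (R ^ 2 + R ^ 4) * (T * (V ^ 2 + (σ * V') ^ 2)) := l1
      _ ≤ (R ^ 2 + R ^ 4) * (T * (Ca * (2 * V * (σ * V') - m * V ^ 2) +
          Cb * (Z ^ 2 + U ^ 2 + W ^ 2 + σ ^ 2 * V ^ 2))) := by gcongr
      _ = (R ^ 2 + R ^ 4) * Ca * (-m * T * V ^ 2 + T * σ * (2 * V * V')) +
          (R ^ 2 + R ^ 4) * Cb * (T * (Z ^ 2 + U ^ 2 + W ^ 2 + σ ^ 2 * V ^ 2)) := by ring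
      _ ≤ (R ^ 2 + R ^ 4) * Ca * (-m * T * V ^ 2 + T * σ * (2 * V * V')) +
          (R ^ 2 + R ^ 4) * Cb * ((1 + S) / r₀ ^ 4 *
        (y ^ 4 * T * (W ^ 2 + U ^ 2 + Z ^ 2) + y ^ 2 * (T * σ) * (W ^ 2 + (y * V) ^ 2))) := by gcongr
      _ = _ := by ring
  have c0 := hrpc α hα.le
  have c1 := hrpc (α + 1) (by linarith)
  have c2 := hrpc (α + 2) (by linarith)
  have iL : IntervalIntegrable (fun y => y ^ 2 * s y ^ α * v y ^ 2 + y ^ 4 * s y ^ (α + 2) * v' y ^ 2)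
      MeasureTheory.volume r₀ R := by
    apply ContinuousOn.intervalIntegrable_of_Icc hrR.le
    fun_prop
  have iR : IntervalIntegrable (fun y => y ^ 4 * s y ^ α * (w y ^ 2 + u y ^ 2 + z y ^ 2)
              + y ^ 2 * s y ^ (α + 1) * (w y ^ 2 + (y * v y) ^ 2))
      MeasureTheory.volume r₀ R := by
    apply ContinuousOn.intervalIntegrable_of_Icc hrR.le
    fun_prop
  have iE : IntervalIntegrable E MeasureTheory.volume r₀ R := hEc.intervalIntegrable_of_Icc hrR.le
  have hcongr : ∀ f g : ℝ → ℝ, (∀ y ∈ Ioo r₀ R, f y = g y) → ∫ y in r₀..R, f y = ∫ y in r₀..R, g y := by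
    intro f g hfg
    rw [intervalIntegral.integral_of_le hrR.le, intervalIntegral.integral_of_le hrR.le,
      MeasureTheory.integral_Ioc_eq_integral_Ioo, MeasureTheory.integral_Ioc_eq_integral_Ioo]
    exact MeasureTheory.setIntegral_congr_fun measurableSet_Ioo hfg
  have hL := hcongr (fun y => y ^ 2 * (K * (1 / y - 1 / R)) ^ α * (deriv w y) ^ 2
      + y ^ 4 * (K * (1 / y - 1 / R)) ^ (α + 2) * (deriv (deriv w) y) ^ 2)
    (fun y => y ^ 2 * s y ^ α * v y ^ 2 + y ^ 4 * s y ^ (α + 2) * v' y ^ 2)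
    (fun y hy => by simp only [hs, hwv y hy, hwv' y hy])
  have hRr := hcongr (fun y => y ^ 4 * (K * (1 / y - 1 / R)) ^ α * (w y ^ 2 + u y ^ 2 + z y ^ 2)
      + y ^ 2 * (K * (1 / y - 1 / R)) ^ (α + 1) * (w y ^ 2 + (y * deriv w y) ^ 2))
    (fun y => y ^ 4 * s y ^ α * (w y ^ 2 + u y ^ 2 + z y ^ 2)
              + y ^ 2 * s y ^ (α + 1) * (w y ^ 2 + (y * v y) ^ 2))
    (fun y hy => by simp only [hs, hwv y hy])
  have hmono := intervalIntegral.integral_mono_on_of_le_Ioo hrR.le iL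
    ((iE.const_mul ((R ^ 2 + R ^ 4) * Ca)).add
      (iR.const_mul ((R ^ 2 + R ^ 4) * Cb * ((1 + S) / r₀ ^ 4)))) hpt
  rw [intervalIntegral.integral_add (iE.const_mul _) (iR.const_mul _),
    intervalIntegral.integral_const_mul, intervalIntegral.integral_const_mul] at hmono
  have hneg : (R ^ 2 + R ^ 4) * Ca * ∫ y in r₀..R, E y ≤ 0 :=
    mul_nonpos_of_nonneg_of_nonpos (by positivity) hEint
  refine (le_of_eq hL).trans (le_trans ?_ (le_of_eq (congrArg _ hRr.symm)))
  linarith
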